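/- Let $n$ be a positive integer. For $\sigma$ in the symmetric group $S_n$ on $\{1,\dots,n\}$, the recoil set $R(\sigma)\subseteq\{1,\dots,n-1\}$ is the set of all $i$ with $\sigma^{-1}(i)>\sigma^{-1}(i+1)$, and for $I\subseteq\{1,\dots,n-1\}$ the recoil class of $I$ is $\mathcal{Y}_I=\{\sigma\in S_n : R(\sigma)=I\}$. Endow $S_n$ with the right Cayley graph structure for the simple transpositions $s_i=(i,i+1)$, $1\le i\le n-1$ ($\sigma$ and $\sigma'$ are adjacent iff $\sigma'=\sigma s_i$ for some $i$), and endow each recoil class with the induced graph structure. Let $I,J,K\subseteq\{1,\dots,n-1\}$. Endow $\mathcal{Y}_I\times\mathcal{Y}_J$ with the product graph structure (two pairs are adjacent iff they agree in one coordinate and are adjacent in the other), and let $\mathcal{Z}_{IJK}=\{(\pi,\rho)\in\mathcal{Y}_I\times\mathcal{Y}_J : \pi\rho\in\mathcal{Y}_K\}$, with the graph structure whose edges are the edges of $\mathcal{Y}_I\times\mathcal{Y}_J$ between elements of $\mathcal{Z}_{IJK}$ that lie over edges of $\mathcal{Y}_K$; that is, $(\pi,\rho)$ and $(\pi',\rho')$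 in $\mathcal{Z}_{IJK}$ are adjacent iff they are adjacent in $\mathcal{Y}_I\times\mathcal{Y}_J$ and $\pi\rho$, $\pi'\rho'$ are adjacent in $\mathcal{Y}_K$. If $\mathcal{Z}_{IJK}$ is nonempty, then the product map $(\pi,\rho)\mapsto\pi\rho$ from $\mathcal{Z}_{IJK}$ to $\mathcal{Y}_K$ is a covering map of graphs: it is surjective, it maps edges to edges, and for every edge $\{\sigma,\tau\}$ of $\mathcal{Y}_K$ and every $(\pi,\rho)\in\mathcal{Z}_{IJK}$ with $\pi\rho=\sigma$ there is a unique $(\pi',\rho')\in\mathcal{Z}_{IJK}$ adjacent to $(\pi,\rho)$ with $\pi'\rho'=\tau$. -/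

import Mathlib

/-!
Conventions. `S_n` is `Equiv.Perm (Fin n)`, so the letters `1, …, n` are shifted to `0, …, n-1`;
the index set `{1, …, n-1}` of the simple transpositions, descents and recoils is `Fin (n - 1)`,
where `i : Fin (n - 1)` stands for the 1-based index `i + 1`.
-/

/-- The letter `i` of `S_n`, for an index `i` of a simple transposition. -/
def lowLetter {n : ℕ} (i : Fin (n - 1)) : Fin n := ⟨i, by omega⟩

/-- The letter `i + 1` of `S_n`, for an index `i` of a simple transposition. -/
def highLetter {n : ℕ} (i : Fin (n - 1)) : Fin n := ⟨i + 1, by omega⟩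

/-- The simple transposition `s_i = (i, i+1)`. -/
def simpleTransposition {n : ℕ} (i : Fin (n - 1)) : Equiv.Perm (Fin n) :=
  Equiv.swap (lowLetter i) (highLetter i)

/-- The descent set: all `i` with `σ(i) > σ(i+1)`. -/
def descentSet {n : ℕ} (σ : Equiv.Perm (Fin n)) : Finset (Fin (n - 1)) :=
  Finset.univ.filter fun i => σ (highLetter i) < σ (lowLetter i)

/-- The recoil set: the descent set of the inverse. -/
def recoilSet {n : ℕ} (σ : Equiv.Perm (Fin n)) : Finset (Fin (n - 1)) :=
  descentSet σ⁻¹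

/-- The recoil class of `I`. -/
def recoilClass {n : ℕ} (I : Finset (Fin (n - 1))) : Set (Equiv.Perm (Fin n)) :=
  {σ | recoilSet σ = I}

/-- The right Cayley graph of `S_n` for the simple transpositions: `σ` and `τ` are adjacent
iff `τ = σ s_i` for some `i`. -/
def cayleyGraph (n : ℕ) : SimpleGraph (Equiv.Perm (Fin n)) :=
  SimpleGraph.mulCayley (Set.range (simpleTransposition (n := n)))

/-- The graph on a recoil class induced from the Cayley graph. -/
def recoilGraph {n : ℕ} (I : Finset (Fin (n - 1))) : SimpleGraph (recoilClass I) :=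
  (cayleyGraph n).induce (recoilClass I)

/-- The set of pairs in `𝒴_I × 𝒴_J` whose product lies in `𝒴_K`. -/
def factorizationSet {n : ℕ} (I J K : Finset (Fin (n - 1))) :
    Set (recoilClass I × recoilClass J) :=
  {p | (p.1 : Equiv.Perm (Fin n)) * (p.2 : Equiv.Perm (Fin n)) ∈ recoilClass K}

/-- The product map `(π, ρ) ↦ πρ` from `𝒵_{IJK}` to `𝒴_K`. -/
def productMap {n : ℕ} (I J K : Finset (Fin (n - 1))) :
    factorizationSet I J K → recoilClass K :=
  fun p => ⟨(p.1.1 : Equiv.Perm (Fin n)) * (p.1.2 : Equiv.Perm (Fin n)), p.2⟩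

/-- The graph on `𝒵_{IJK}`: its edges are the edges of the product graph `𝒴_I □ 𝒴_J` with both
ends in `𝒵_{IJK}` that lie over an edge of `𝒴_K`, i.e. whose ends have adjacent products.
(The product graph can also join two pairs of `𝒵_{IJK}` with non-adjacent products; these pairs
are not joined here.) -/
def factorizationGraph {n : ℕ} (I J K : Finset (Fin (n - 1))) :
    SimpleGraph (factorizationSet I J K) :=
  (recoilGraph I □ recoilGraph J).induce (factorizationSet I J K) ⊓
    (recoilGraph K).comap (productMap I J K)

/-- Covering maps of simple graphs. -/
structure IsGraphCovering {V W : Type*} (G : SimpleGraph V) (H : SimpleGraph W) (f : V → W) :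
    Prop where
  surjective : Function.Surjective f
  map_adj : ∀ u v : V, G.Adj u v → H.Adj (f u) (f v)
  existsUnique_lift : ∀ w z : W, H.Adj w z → ∀ u : V, f u = w → ∃! v : V, G.Adj u v ∧ f v = z

/-!
The recoil sets of `σ` and `σ s_i` differ at `j` exactly when `s_j = σ s_i σ⁻¹`, so the edge
`{σ, σ s_i}` stays within a recoil class iff the conjugate `σ s_i σ⁻¹` is not simple.

Consequently an edge from `πρ` to `πρ s_i` lifts to `(π, ρ s_i)` if `ρ s_i ρ⁻¹` is not simple; if
`ρ s_i ρ⁻¹ = s_j`, it lifts to `(π s_j, ρ)` instead, because the conjugate of `s_j` by `π` is that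
of `s_i` by `πρ`. The two cases exclude each other, whence uniqueness.

Surjectivity follows once recoil classes are connected. Undoing descents that drop by more than one
stays in the class and decreases the word lexicographically, so every component contains a
permutation all of whose descents drop by exactly one; such a permutation is determined by its
recoil set.
-/

theorem surjective_of_preconnected_of_exists_lift {V W : Type*} [Nonempty V] {H : SimpleGraph W}
    {f : V → W} (hH : H.Preconnected) (hf : ∀ u z, H.Adj (f u) z → ∃ v, f v = z) :
    Function.Surjective f := by
  intro z
  obtain ⟨u⟩ := ‹Nonempty V›
  induction (SimpleGraph.reachable_iff_reflTransGen _ _).1 (hH (f u) z) with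
  | refl => exact ⟨u, rfl⟩
  | tail _ hadj ih =>
    obtain ⟨v, rfl⟩ := ih
    exact hf v _ hadj

section Recoil

variable {n : ℕ}

section Letters

theorem lt_highLetter_iff {a : Fin n} {i : Fin (n - 1)} : a < highLetter i ↔ a ≤ lowLetter i :=
  Nat.lt_succ_iff

theorem lowLetter_lt_highLetter (i : Fin (n - 1)) : lowLetter i < highLetter i :=
  lt_highLetter_iff.2 le_rfl

theorem exists_highLetter_eq_of_lt {a b : Fin n} (hab : a < b) :
    ∃ i : Fin (n - 1), highLetter i = b :=
  ⟨⟨b - 1, by omega⟩, Fin.ext (Nat.sub_add_cancel (Nat.zero_lt_of_lt hab))⟩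

end Letters

section SimpleTransposition

theorem simpleTransposition_mul_self (i : Fin (n - 1)) :
    simpleTransposition i * simpleTransposition i = 1 :=
  Equiv.swap_mul_self _ _

theorem simpleTransposition_inv (i : Fin (n - 1)) :
    (simpleTransposition i)⁻¹ = simpleTransposition i :=
  Equiv.swap_inv _ _

theorem simpleTransposition_ne_one (i : Fin (n - 1)) : simpleTransposition i ≠ 1 :=
  fun h => (lowLetter_lt_highLetter i).ne (Equiv.swap_eq_one_iff.1 h)

theorem le_simpleTransposition_apply_add_one (i : Fin (n - 1)) (a : Fin n) :
    (a : ℕ) ≤ simpleTransposition i a + 1 := by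
  rw [simpleTransposition, Equiv.swap_apply_def]
  split_ifs with hlow hhigh
  · exact hlow ▸ Nat.le_succ_of_le (lowLetter_lt_highLetter i).le
  · exact hhigh ▸ le_rfl
  · exact Nat.le_succ _

theorem simpleTransposition_lt_simpleTransposition_iff {i : Fin (n - 1)} {a b : Fin n}
    (h : simpleTransposition i ≠ Equiv.swap a b) :
    simpleTransposition i a < simpleTransposition i b ↔ a < b := by
  have hlow_high : ¬(a = lowLetter i ∧ b = highLetter i) := by
    rintro ⟨rfl, rfl⟩
    exact h rfl
  have hhigh_low : ¬(a = highLetter i ∧ b = lowLetter i) := by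
    rintro ⟨rfl, rfl⟩
    exact h (Equiv.swap_comm _ _)
  simp only [simpleTransposition, Equiv.swap_apply_def, lowLetter, highLetter, Fin.ext_iff] at *
  split_ifs <;> simp only [Fin.lt_def] <;> omega

theorem simpleTransposition_lt_iff_lt_iff_ne_swap {i : Fin (n - 1)} {a b : Fin n} (hab : a ≠ b) :
    (simpleTransposition i a < simpleTransposition i b ↔ a < b) ↔
      simpleTransposition i ≠ Equiv.swap a b := by
  refine ⟨fun h hswap => ?_, simpleTransposition_lt_simpleTransposition_iff⟩
  rw [hswap, Equiv.swap_apply_left, Equiv.swap_apply_right] at h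
  rcases hab.lt_or_gt with hlt | hgt
  · exact hlt.asymm (h.2 hlt)
  · exact hgt.asymm (h.1 hgt)

theorem conj_simpleTransposition_apply (σ : Equiv.Perm (Fin n)) (i : Fin (n - 1)) :
    (σ * simpleTransposition i * σ⁻¹) (σ (lowLetter i)) = σ (highLetter i) := by
  rw [simpleTransposition, ← Equiv.swap_apply_apply, Equiv.swap_apply_left]

end SimpleTransposition

section RecoilSet

theorem mem_recoilSet {σ : Equiv.Perm (Fin n)} {j : Fin (n - 1)} :
    j ∈ recoilSet σ ↔ σ⁻¹ (highLetter j) < σ⁻¹ (lowLetter j) :=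
  Finset.mem_filter_univ _

theorem mem_recoilSet_mul_simpleTransposition_iff_iff_ne (σ : Equiv.Perm (Fin n))
    (i j : Fin (n - 1)) :
    (j ∈ recoilSet (σ * simpleTransposition i) ↔ j ∈ recoilSet σ) ↔
      simpleTransposition j ≠ σ * simpleTransposition i * σ⁻¹ := by
  have hpositions : σ⁻¹ (highLetter j) ≠ σ⁻¹ (lowLetter j) :=
    σ⁻¹.injective.ne (lowLetter_lt_highLetter j).ne'
  have hconj : simpleTransposition i = Equiv.swap (σ⁻¹ (highLetter j)) (σ⁻¹ (lowLetter j)) ↔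
      simpleTransposition j = σ * simpleTransposition i * σ⁻¹ := by
    rw [Equiv.swap_apply_apply, Equiv.swap_comm, inv_inv, ← simpleTransposition, eq_comm,
      mul_assoc, inv_mul_eq_iff_eq_mul, ← eq_mul_inv_iff_mul_eq]
  rw [mem_recoilSet, mem_recoilSet, mul_inv_rev, simpleTransposition_inv, Equiv.Perm.mul_apply,
    Equiv.Perm.mul_apply, simpleTransposition_lt_iff_lt_iff_ne_swap hpositions, Ne, hconj]

theorem recoilSet_mul_simpleTransposition_eq_iff (σ : Equiv.Perm (Fin n)) (i : Fin (n - 1)) :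
    recoilSet (σ * simpleTransposition i) = recoilSet σ ↔
      σ * simpleTransposition i * σ⁻¹ ∉ Set.range simpleTransposition := by
  simp only [Finset.ext_iff, mem_recoilSet_mul_simpleTransposition_iff_iff_ne, Set.mem_range,
    not_exists]

theorem mul_simpleTransposition_mem_recoilClass_iff {K : Finset (Fin (n - 1))}
    {σ : Equiv.Perm (Fin n)} (hσ : σ ∈ recoilClass K) (i : Fin (n - 1)) :
    σ * simpleTransposition i ∈ recoilClass K ↔
      σ * simpleTransposition i * σ⁻¹ ∉ Set.range simpleTransposition := by
  rw [← recoilSet_mul_simpleTransposition_eq_iff, show recoilSet σ = K from hσ]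
  rfl

theorem cayleyGraph_adj {σ τ : Equiv.Perm (Fin n)} :
    (cayleyGraph n).Adj σ τ ↔ ∃ i, τ = σ * simpleTransposition i := by
  rw [cayleyGraph, SimpleGraph.mulCayley_adj']
  constructor
  · rintro ⟨-, _, ⟨i, rfl⟩, h | h⟩
    · exact ⟨i, h.symm⟩
    · exact ⟨i, by rw [h, mul_assoc, simpleTransposition_mul_self, mul_one]⟩
  · rintro ⟨i, rfl⟩
    exact ⟨fun h => simpleTransposition_ne_one i (left_eq_mul.1 h), _, ⟨i, rfl⟩, .inl rfl⟩

theorem recoilGraph_adj {K : Finset (Fin (n - 1))} {σ τ : recoilClass K} :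
    (recoilGraph K).Adj σ τ ↔
      ∃ i, (τ : Equiv.Perm (Fin n)) = (σ : Equiv.Perm (Fin n)) * simpleTransposition i :=
  cayleyGraph_adj

end RecoilSet

section Connectedness

/-- The permutations whose descents all drop by exactly one; they serve as normal forms for the
recoil classes. At an ascent the inequality holds trivially. -/
def HasUnitDescents (σ : Equiv.Perm (Fin n)) : Prop :=
  ∀ i : Fin (n - 1), (σ (lowLetter i) : ℕ) ≤ σ (highLetter i) + 1

theorem exists_reachable_hasUnitDescents {K : Finset (Fin (n - 1))} (σ : recoilClass K) :
    ∃ τ : recoilClass K, (recoilGraph K).Reachable σ τ ∧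
      HasUnitDescents (τ : Equiv.Perm (Fin n)) := by
  obtain ⟨τ, hτ, hmin⟩ := Set.exists_min_image {τ | (recoilGraph K).Reachable σ τ}
    (fun τ => toLex ⇑(τ : Equiv.Perm (Fin n))) (Set.toFinite _) ⟨σ, .refl σ⟩
  refine ⟨τ, hτ, fun i => not_lt.1 fun hdrop => ?_⟩
  have hconj : τ.1 * simpleTransposition i * τ.1⁻¹ ∉ Set.range simpleTransposition := by
    rintro ⟨j, hj⟩
    have hle := le_simpleTransposition_apply_add_one j (τ.1 (lowLetter i))
    rw [hj, conj_simpleTransposition_apply] at hle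
    exact hle.not_gt hdrop
  have hmem := (mul_simpleTransposition_mem_recoilClass_iff τ.2 i).2 hconj
  have hadj : (recoilGraph K).Adj τ ⟨_, hmem⟩ := recoilGraph_adj.2 ⟨i, rfl⟩
  have hlex : toLex ⇑(τ.1 * simpleTransposition i) < toLex ⇑τ.1 :=
    Pi.lex_desc (lowLetter_lt_highLetter i).le ((Nat.lt_succ_self _).trans hdrop)
  exact (hmin _ (hτ.trans hadj.reachable)).not_gt hlex

theorem HasUnitDescents.inv_apply_mem_Icc {σ : Equiv.Perm (Fin n)} (hσ : HasUnitDescents σ)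
    {p q c : Fin n} (hpq : p ≤ q) (hc : c ∈ Set.Icc (σ q) (σ p)) : σ⁻¹ c ∈ Set.Icc p q := by
  induction q using WellFoundedLT.induction with
  | ind q ih =>
    rcases hc.1.eq_or_lt with rfl | hlt
    · simpa using hpq
    have hne : p ≠ q := by
      rintro rfl
      exact hlt.not_ge hc.2
    obtain ⟨j, rfl⟩ := exists_highLetter_eq_of_lt (hpq.lt_of_ne hne)
    have hstep : σ (lowLetter j) ≤ c := Fin.le_def.2 ((hσ j).trans hlt)
    have hmem := ih (lowLetter j) (lowLetter_lt_highLetter j)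
      (lt_highLetter_iff.1 (hpq.lt_of_ne hne)) ⟨hstep, hc.2⟩
    exact ⟨hmem.1, hmem.2.trans (lowLetter_lt_highLetter j).le⟩

-- All values between `a` and `b` occur between their positions, so the inversion of `a` and `b`
-- is a chain of recoils.
theorem HasUnitDescents.inv_apply_lt_of_recoilSet_subset {σ τ : Equiv.Perm (Fin n)}
    (hσ : HasUnitDescents σ) (hστ : recoilSet σ ⊆ recoilSet τ) {a b : Fin n} (hab : a < b)
    (hinv : σ⁻¹ b < σ⁻¹ a) : τ⁻¹ b < τ⁻¹ a := by
  induction b using WellFoundedLT.induction with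
  | ind b ih =>
    obtain ⟨j, rfl⟩ := exists_highLetter_eq_of_lt hab
    have hlow : a ≤ lowLetter j := lt_highLetter_iff.1 hab
    have hbetween : σ⁻¹ (lowLetter j) ∈ Set.Icc (σ⁻¹ (highLetter j)) (σ⁻¹ a) :=
      hσ.inv_apply_mem_Icc hinv.le (by simpa using ⟨hlow, (lowLetter_lt_highLetter j).le⟩)
    have hrecoil : j ∈ recoilSet σ := mem_recoilSet.2
      (hbetween.1.lt_of_ne (σ⁻¹.injective.ne (lowLetter_lt_highLetter j).ne'))
    have hτ : τ⁻¹ (highLetter j) < τ⁻¹ (lowLetter j) := mem_recoilSet.1 (hστ hrecoil)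
    rcases hlow.eq_or_lt with rfl | hlt
    · exact hτ
    · exact hτ.trans (ih _ (lowLetter_lt_highLetter j) hlt
        (hbetween.2.lt_of_ne (σ⁻¹.injective.ne hlt.ne')))

theorem HasUnitDescents.eq_of_recoilSet_eq {σ τ : Equiv.Perm (Fin n)} (hσ : HasUnitDescents σ)
    (hτ : HasUnitDescents τ) (h : recoilSet σ = recoilSet τ) : σ = τ := by
  have hmono : StrictMono ⇑(τ⁻¹ * σ) := by
    intro p q hpq
    rcases lt_or_gt_of_ne (σ.injective.ne hpq.ne) with hasc | hdesc
    · refine lt_of_not_ge fun hge => hpq.asymm ?_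
      have hlt : τ⁻¹ (σ q) < τ⁻¹ (σ p) := hge.lt_of_ne ((τ⁻¹ * σ).injective.ne hpq.ne')
      simpa using hτ.inv_apply_lt_of_recoilSet_subset h.ge hasc hlt
    · exact hσ.inv_apply_lt_of_recoilSet_subset h.le hdesc (by simpa using hpq)
  have hid : ⇑(τ⁻¹ * σ) = id := hmono.eq_id
  exact (inv_mul_eq_one.1 (DFunLike.coe_injective hid)).symm

theorem recoilGraph_preconnected (K : Finset (Fin (n - 1))) : (recoilGraph K).Preconnected := by
  intro σ τ
  obtain ⟨σ', hσσ', hσ'⟩ := exists_reachable_hasUnitDescents σ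
  obtain ⟨τ', hττ', hτ'⟩ := exists_reachable_hasUnitDescents τ
  obtain rfl : σ' = τ' := Subtype.ext (hσ'.eq_of_recoilSet_eq hτ' (σ'.2.trans τ'.2.symm))
  exact hσσ'.trans hττ'.symm

end Connectedness

section Lifting

variable {I J K : Finset (Fin (n - 1))}

theorem factorizationGraph_adj {u v : factorizationSet I J K} :
    (factorizationGraph I J K).Adj u v ↔
      (recoilGraph I □ recoilGraph J).Adj u.1 v.1 ∧
        (recoilGraph K).Adj (productMap I J K u) (productMap I J K v) :=
  Iff.rfl

theorem exists_lift_of_boxProd_adj {u : factorizationSet I J K} {z : recoilClass K}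
    (hz : (recoilGraph K).Adj (productMap I J K u) z) {p : recoilClass I × recoilClass J}
    (hp : (recoilGraph I □ recoilGraph J).Adj u.1 p)
    (hprod : (p.1 : Equiv.Perm (Fin n)) * (p.2 : Equiv.Perm (Fin n)) = z) :
    ∃ v, (factorizationGraph I J K).Adj u v ∧ productMap I J K v = z := by
  have hmem : p ∈ factorizationSet I J K := by
    rw [factorizationSet, Set.mem_ofPred_eq, hprod]
    exact z.2
  obtain rfl : productMap I J K ⟨p, hmem⟩ = z := Subtype.ext hprod
  exact ⟨⟨p, hmem⟩, factorizationGraph_adj.2 ⟨hp, hz⟩, rfl⟩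

theorem exists_lift_productMap {u : factorizationSet I J K} {z : recoilClass K}
    (hz : (recoilGraph K).Adj (productMap I J K u) z) :
    ∃ v, (factorizationGraph I J K).Adj u v ∧ productMap I J K v = z := by
  obtain ⟨i, hi⟩ := recoilGraph_adj.1 hz
  obtain ⟨⟨⟨π, hπ⟩, ⟨ρ, hρ⟩⟩, hπρ⟩ := u
  change z.1 = π * ρ * simpleTransposition i at hi
  by_cases hconj : ρ * simpleTransposition i * ρ⁻¹ ∈ Set.range simpleTransposition
  · obtain ⟨j, hj⟩ := hconj
    have hπj : π * simpleTransposition j ∈ recoilClass I := by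
      have hz' := (mul_simpleTransposition_mem_recoilClass_iff hπρ i).1 (hi ▸ z.2)
      rw [mul_simpleTransposition_mem_recoilClass_iff hπ, hj]
      simpa only [mul_inv_rev, mul_assoc] using hz'
    have hprod : π * simpleTransposition j * ρ = z := by
      rw [hi, hj, mul_assoc, inv_mul_cancel_right, mul_assoc]
    exact exists_lift_of_boxProd_adj hz (p := (⟨_, hπj⟩, ⟨ρ, hρ⟩))
      (.inl ⟨recoilGraph_adj.2 ⟨j, rfl⟩, rfl⟩) hprod
  · have hρi := (mul_simpleTransposition_mem_recoilClass_iff hρ i).2 hconj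
    exact exists_lift_of_boxProd_adj hz (p := (⟨π, hπ⟩, ⟨_, hρi⟩))
      (.inr ⟨recoilGraph_adj.2 ⟨i, rfl⟩, rfl⟩) (by rw [hi, mul_assoc])

theorem productMap_eq_iff_of_fst_eq {v w : factorizationSet I J K} (h : v.1.1 = w.1.1) :
    productMap I J K v = productMap I J K w ↔ v = w := by
  simp only [productMap, Subtype.ext_iff, Prod.ext_iff, h, mul_right_inj, true_and]

theorem productMap_eq_iff_of_snd_eq {v w : factorizationSet I J K} (h : v.1.2 = w.1.2) :
    productMap I J K v = productMap I J K w ↔ v = w := by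
  simp only [productMap, Subtype.ext_iff, Prod.ext_iff, h, mul_left_inj, and_true]

theorem fst_eq_or_snd_eq_of_factorizationGraph_adj {u v : factorizationSet I J K}
    (huv : (factorizationGraph I J K).Adj u v) {i : Fin (n - 1)}
    (hi : (productMap I J K v : Equiv.Perm (Fin n)) =
      productMap I J K u * simpleTransposition i) :
    u.1.2.1 * simpleTransposition i * u.1.2.1⁻¹ ∉ Set.range simpleTransposition ∧
        u.1.1 = v.1.1 ∨
      u.1.2.1 * simpleTransposition i * u.1.2.1⁻¹ ∈ Set.range simpleTransposition ∧
        u.1.2 = v.1.2 := by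
  change v.1.1.1 * v.1.2.1 = u.1.1.1 * u.1.2.1 * simpleTransposition i at hi
  obtain ⟨hleft, hsnd⟩ | ⟨-, hfst⟩ := (factorizationGraph_adj.1 huv).1
  · obtain ⟨j, hj⟩ := recoilGraph_adj.1 hleft
    rw [hj, ← hsnd, mul_assoc, mul_assoc, mul_right_inj] at hi
    exact .inr ⟨⟨j, eq_mul_inv_of_mul_eq hi⟩, hsnd⟩
  · rw [← hfst, mul_assoc, mul_right_inj] at hi
    exact .inl ⟨(mul_simpleTransposition_mem_recoilClass_iff u.1.2.2 i).1 (hi ▸ v.1.2.2), hfst⟩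

theorem eq_of_factorizationGraph_adj_of_productMap_eq {u v w : factorizationSet I J K}
    (huv : (factorizationGraph I J K).Adj u v) (huw : (factorizationGraph I J K).Adj u w)
    (hvw : productMap I J K v = productMap I J K w) : v = w := by
  obtain ⟨i, hi⟩ := recoilGraph_adj.1 (factorizationGraph_adj.1 huv).2
  rcases fst_eq_or_snd_eq_of_factorizationGraph_adj huv hi with ⟨hnot, hv⟩ | ⟨hconj, hv⟩ <;>
    rcases fst_eq_or_snd_eq_of_factorizationGraph_adj huw (hvw ▸ hi) with
      ⟨hnot', hw⟩ | ⟨hconj', hw⟩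
  · exact (productMap_eq_iff_of_fst_eq (hv.symm.trans hw)).1 hvw
  · exact absurd hconj' hnot
  · exact absurd hconj hnot'
  · exact (productMap_eq_iff_of_snd_eq (hv.symm.trans hw)).1 hvw

end Lifting

end Recoil

/-- If `𝒵_{IJK}` is nonempty, the product map `𝒵_{IJK} → 𝒴_K` is a covering map of graphs. -/
theorem statement7 (n : ℕ) (hn : 0 < n) (I J K : Finset (Fin (n - 1)))
    (hZ : (factorizationSet I J K).Nonempty) :
    IsGraphCovering (factorizationGraph I J K) (recoilGraph K) (productMap I J K) where
  surjective :=
    have : Nonempty (factorizationSet I J K) := hZ.to_subtype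
    surjective_of_preconnected_of_exists_lift (recoilGraph_preconnected K) fun _ _ hz =>
      (exists_lift_productMap hz).imp fun _ hv => hv.2
  map_adj _ _ huv := (factorizationGraph_adj.1 huv).2
  existsUnique_lift := by
    rintro _ z hz u rfl
    exact existsUnique_of_exists_of_unique (exists_lift_productMap hz) fun _ _ hv hw =>
      eq_of_factorizationGraph_adj_of_productMap_eq hv.1 hw.1 (hv.2.trans hw.2.symm)
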